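/- arXiv:2001.00314 — 2 statements merged into one kernel-verified Lean document; each statement's English description precedes it below -/
import Mathlib

section
/- Every 2-vector space has its composition given by the ⋄ formula. Precisely: let (C₀, C₁, s, t, i) be a reflexive graph internal to real vector spaces, let K = {(f, g) ∈ C₁ × C₁ : t(f) = s(g)} be the subspace of composable pairs, and let c : K → C₁ be a linear map satisfying the unit laws c(f, i(t(f))) = f and c(i(s(g)), g) = g for all f, g ∈ C₁. Then for every composable pair (f, g) ∈ K, c(f, g) = f + g − i(t(f)). -/
/-- Every 2-vector space has composition given by the `⋄` formula: if `K` is the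
subspace of composable pairs of a reflexive graph internal to real vector spaces and
`c : K →ₗ[ℝ] C₁` is a linear composition map satisfying the unit laws, then
`c (f, g) = f + g - i (t f)` for every composable pair `(f, g)`. -/
theorem twoVectorSpace_comp_eq_diamond
    {C₀ C₁ : Type*} [AddCommGroup C₀] [Module ℝ C₀] [AddCommGroup C₁] [Module ℝ C₁]
    (s t : C₁ →ₗ[ℝ] C₀) (i : C₀ →ₗ[ℝ] C₁)
    (hsi : ∀ x : C₀, s (i x) = x) (hti : ∀ x : C₀, t (i x) = x)
    (K : Submodule ℝ (C₁ × C₁)) (hK : ∀ p : C₁ × C₁, p ∈ K ↔ t p.1 = s p.2)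
    (c : K →ₗ[ℝ] C₁)
    (unit_right : ∀ (f : C₁) (h : ((f, i (t f)) : C₁ × C₁) ∈ K), c ⟨(f, i (t f)), h⟩ = f)
    (unit_left : ∀ (g : C₁) (h : ((i (s g), g) : C₁ × C₁) ∈ K), c ⟨(i (s g), g), h⟩ = g) :
    ∀ p : K, c p = (p : C₁ × C₁).1 + (p : C₁ × C₁).2 - i (t (p : C₁ × C₁).1) := by
  rintro ⟨⟨f, g⟩, hp⟩
  have hfg : t f = s g := (hK _).1 hp
  have h1 : ((f, i (t f)) : C₁ × C₁) ∈ K := (hK _).2 (by simp [hsi])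
  have h2 : ((i (s g), g) : C₁ × C₁) ∈ K := (hK _).2 (by simp [hti])
  have h3 : ((i (s (i (t f))), i (t f)) : C₁ × C₁) ∈ K := (hK _).2 (by simp [hti, hsi])
  have e : (⟨(f, g), hp⟩ : K) = ⟨_, h1⟩ + ⟨_, h2⟩ - ⟨_, h3⟩ := by
    apply Subtype.ext
    apply Prod.ext
    · simp [hsi, hfg]
    · simp
  rw [e, map_sub, map_add, unit_right, unit_left, unit_left]
  simp [hsi, hfg]
end

section
/- Let C and D be small categories, F, G : C → D functors, and α : F ⇒ G a natural transformation. Let Ch(F) and Ch(G) denote the chain maps obtained by applying to N(F) and N(G) the composite of the nerve functor, the levelwise free real vector space functor (turning simplicial sets into simplicial real vector spaces), and the alternating face map chain complex functor. Then there exists a chain homotopy from Ch(F) to Ch(G), i.e., a family of linear maps α_n : Ch(C)_n → Ch(D)_{n+1} with Ch(G)_n − Ch(F)_n = δ_{n+1} ∘ α_n + α_{n−1} ∘ δ_n for all n. -/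
open CategoryTheory AlgebraicTopology

/-- The composite 2-functor `Cat ⥤ Ch•(Vect)`: take the nerve, apply the free real
vector space functor levelwise, then take the alternating face map chain complex. -/
noncomputable def chainFunctor : Cat.{0, 0} ⥤ ChainComplex (ModuleCat.{0} ℝ) ℕ :=
  nerveFunctor ⋙
    (SimplicialObject.whiskering (Type 0) (ModuleCat.{0} ℝ)).obj (ModuleCat.free ℝ) ⋙
    alternatingFaceMapComplex (ModuleCat.{0} ℝ)

open MonoidalCategory Simplicial Opposite in
/-- The map `N(C) ⊗ Δ[1] ⟶ N(D)` induced by a natural transformation. -/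
noncomputable def nerveHomotopyMap {C D : Type} [SmallCategory C] [SmallCategory D]
    {F G : C ⥤ D} (α : F ⟶ G) : nerve C ⊗ Δ[1] ⟶ nerve D where
  app n := ↾fun x ↦
    (Functor.prod' (SSet.stdSimplex.objEquiv x.2).toOrderHom.monotone.functor x.1) ⋙
      Functor.uncurry.obj (ComposableArrows.mk₁ α)
  naturality n m f := by
    ext x
    rfl

/-- A natural transformation induces a homotopy between the maps on nerves. -/
noncomputable def nerveHomotopy {C D : Type} [SmallCategory C] [SmallCategory D]
    {F G : C ⥤ D} (α : F ⟶ G) : SSet.Homotopy (nerveMap F) (nerveMap G) :=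
  { h := nerveHomotopyMap α
    h₀ := by
      ext n x
      refine CategoryTheory.Functor.ext (fun i ↦ rfl) (fun i j f ↦ ?_)
      have key : CategoryTheory.Functor.map (Functor.uncurry.obj (ComposableArrows.mk₁ α))
          (X := (((0 : Fin 2), x.obj i) : Fin 2 × C)) (Y := (((0 : Fin 2), x.obj j) : Fin 2 × C))
          (Prod.mkHom (𝟙 (0 : Fin 2)) (x.map f)) = F.map (x.map f) := by
        simp
        exact Category.id_comp _
      refine Eq.trans key ?_
      exact ((Category.id_comp _).trans (Category.comp_id _)).symm
    h₁ := by
      ext n x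
      refine CategoryTheory.Functor.ext (fun i ↦ rfl) (fun i j f ↦ ?_)
      have key : CategoryTheory.Functor.map (Functor.uncurry.obj (ComposableArrows.mk₁ α))
          (X := (((1 : Fin 2), x.obj i) : Fin 2 × C)) (Y := (((1 : Fin 2), x.obj j) : Fin 2 × C))
          (Prod.mkHom (𝟙 (1 : Fin 2)) (x.map f)) = G.map (x.map f) := by
        simp
        exact Category.id_comp _
      refine Eq.trans key ?_
      exact ((Category.id_comp _).trans (Category.comp_id _)).symm
    rel := by
      ext n x
      exact x.1.2.elim }

theorem natTrans_induces_chain_homotopy {C D : Type} [SmallCategory C] [SmallCategory D]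
    (F G : C ⥤ D) (α : F ⟶ G) :
    Nonempty
      (Homotopy (chainFunctor.map (X := Cat.of C) (Y := Cat.of D) G.toCatHom)
        (chainFunctor.map (X := Cat.of C) (Y := Cat.of D) F.toCatHom)) :=
  ⟨(SimplicialObject.Homotopy.toChainHomotopy
    ((nerveHomotopy α).toSimplicialObjectHomotopy.whiskerRight (ModuleCat.free ℝ))).symm⟩
end
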